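/- Let G be a directed multigraph with finite nonempty node set and finite arrow set, and let M be a live marking of G. Then there exists a firing sequence from M whose final marking is again M and in which every node of G occurs exactly once. -/

import Mathlib

open Classical

variable {V A : Type}

/-- A directed path from `v` to `w`: a nonempty list of arrows chained
head-to-tail, starting at `v` and ending at `w`. -/
def PathFrom (s t : A → V) (v w : V) (p : List A) : Prop :=
  List.Chain' (fun a b => t a = s b) p ∧
    (p.map s).head? = some v ∧ (p.map t).getLast? = some w

/-- A directed circuit: a nonempty directed path that returns to its start. -/
def IsCircuit (s t : A → V) (p : List A) : Prop :=
  ∃ v : V, PathFrom s t v v p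

/-- Strong connectivity: a directed path between every ordered pair of
distinct nodes. -/
def StronglyConnected (s t : A → V) : Prop :=
  ∀ v w : V, v ≠ w → ∃ p : List A, PathFrom s t v w p

/-- Adjacency ignoring arrow direction. -/
def WeakAdj (s t : A → V) (v w : V) : Prop :=
  ∃ a : A, (s a = v ∧ t a = w) ∨ (s a = w ∧ t a = v)

/-- Weak connectivity: every pair of nodes is joined by an undirected path. -/
def WeaklyConnected (s t : A → V) : Prop :=
  ∀ v w : V, Relation.ReflTransGen (WeakAdj s t) v w

/-- A node `v` is enabled in marking `M` if every in-arrow of `v` holds a token. -/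
def Enabled (s t : A → V) (M : A → ℕ) (v : V) : Prop :=
  ∀ a : A, t a = v → 1 ≤ M a

/-- Firing node `v`: remove a token from each in-arrow, add one to each out-arrow. -/
noncomputable def fire (s t : A → V) (M : A → ℕ) (v : V) : A → ℕ :=
  fun a => M a - (if t a = v then 1 else 0) + (if s a = v then 1 else 0)

/-- One firing step between markings. -/
def Step (s t : A → V) (M M' : A → ℕ) : Prop :=
  ∃ v : V, Enabled s t M v ∧ M' = fire s t M v

/-- Reachability: final marking of some (possibly empty) firing sequence. -/
def Reaches (s t : A → V) : (A → ℕ) → (A → ℕ) → Prop :=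
  Relation.ReflTransGen (Step s t)

/-- A marking is live if from every reachable marking, every node can
eventually be enabled. -/
def Live (s t : A → V) (M : A → ℕ) : Prop :=
  ∀ (v : V) (M' : A → ℕ), Reaches s t M M' →
    ∃ M'' : A → ℕ, Reaches s t M' M'' ∧ Enabled s t M'' v

/-- A marking is safe if every reachable marking has at most one token per arrow. -/
def Safe (s t : A → V) (M : A → ℕ) : Prop :=
  ∀ M' : A → ℕ, Reaches s t M M' → ∀ a : A, M' a ≤ 1

/-- `ValidSeq s t M vs`: the list of nodes `vs` is a firing sequence from `M`
(each node is enabled when it fires). -/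
def ValidSeq (s t : A → V) : (A → ℕ) → List V → Prop
  | _, [] => True
  | M, v :: vs => Enabled s t M v ∧ ValidSeq s t (fire s t M v) vs

/-- The final marking of a firing sequence. -/
noncomputable def execute (s t : A → V) : (A → ℕ) → List V → (A → ℕ)
  | M, [] => M
  | M, v :: vs => execute s t (fire s t M v) vs

/-!
Call an arrow token-free if it carries no token in `M`. If some firing sequence from `M` enables
`v`, then every token-free arrow into `v` has received a token, so its source has fired earlier;
tracing this back, the token-free arrows form a well-founded relation on the nodes. Hence whenever
some nodes have not fired yet, a minimal one among them is enabled: each of its in-arrows carries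
an initial token or comes from a node that has fired. So the nodes can be fired one after another,
each once, and this returns to `M` because every arrow gains one token and loses one.
-/

section

variable {s t : A → V} {M M' : A → ℕ} {v : V} {vs ws : List V}

theorem Enabled.fire_apply_add (h : Enabled s t M v) (a : A) :
    fire s t M v a + (if t a = v then 1 else 0) = M a + (if s a = v then 1 else 0) := by
  have htoken : t a = v → 1 ≤ M a := h a
  unfold fire
  split_ifs <;> grind

theorem ValidSeq.execute_apply_add_count (h : ValidSeq s t M vs) (a : A) :
    execute s t M vs a + vs.count (t a) = M a + vs.count (s a) := by
  induction vs generalizing M with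
  | nil => rfl
  | cons v vs ih =>
    have hfire := h.1.fire_apply_add a
    have hrest := ih h.2
    simp only [execute, List.count_cons, beq_iff_eq, eq_comm (a := v)]
    omega

theorem ValidSeq.execute_eq_self_iff (h : ValidSeq s t M vs) :
    execute s t M vs = M ↔ ∀ a, vs.count (s a) = vs.count (t a) := by
  refine funext_iff.trans (forall_congr' fun a => ?_)
  have hbalance := h.execute_apply_add_count a
  omega

theorem validSeq_append :
    ValidSeq s t M (vs ++ ws) ↔ ValidSeq s t M vs ∧ ValidSeq s t (execute s t M vs) ws := by
  induction vs generalizing M with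
  | nil => simp only [List.nil_append, ValidSeq, execute, true_and]
  | cons v vs ih => simp only [List.cons_append, ValidSeq, execute, ih, and_assoc]

/-- `TokenFreeAdj s t M v w`: some arrow from `v` to `w` carries no token in `M`, so that `w`
cannot fire before `v` has fired. -/
def TokenFreeAdj (s t : A → V) (M : A → ℕ) (v w : V) : Prop :=
  ∃ a : A, s a = v ∧ t a = w ∧ M a = 0

theorem Enabled.acc_tokenFreeAdj (hv : Enabled s t M' v)
    (hsource : ∀ a, M a = 0 → M' a ≠ 0 → Acc (TokenFreeAdj s t M) (s a)) :
    Acc (TokenFreeAdj s t M) v := by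
  refine .intro v ?_
  rintro _ ⟨a, rfl, hta, ha⟩
  exact hsource a ha (Nat.one_le_iff_ne_zero.mp (hv a hta))

theorem Reaches.acc_tokenFreeAdj_source (h : Reaches s t M M') (a : A) (ha : M a = 0)
    (ha' : M' a ≠ 0) : Acc (TokenFreeAdj s t M) (s a) := by
  induction h generalizing a with
  | refl => exact absurd ha ha'
  | @tail N _ _ hstep ih =>
    obtain ⟨u, hu, rfl⟩ := hstep
    by_cases hsa : s a = u
    · exact hsa ▸ hu.acc_tokenFreeAdj ih
    · have hN : N a ≠ 0 := fun h0 => ha' (by simp [fire, hsa, h0])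
      exact ih a ha hN

theorem wellFounded_tokenFreeAdj (h : ∀ v, ∃ M', Reaches s t M M' ∧ Enabled s t M' v) :
    WellFounded (TokenFreeAdj s t M) := by
  refine ⟨fun v => ?_⟩
  obtain ⟨M', hM', hv⟩ := h v
  exact hv.acc_tokenFreeAdj hM'.acc_tokenFreeAdj_source

theorem ValidSeq.enabled_execute (h : ValidSeq s t M vs) (hv : v ∉ vs)
    (hpred : ∀ u, TokenFreeAdj s t M u v → u ∈ vs) : Enabled s t (execute s t M vs) v := by
  rintro a rfl
  have hbalance := h.execute_apply_add_count a
  rw [List.count_eq_zero.mpr hv] at hbalance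
  rcases Nat.eq_zero_or_pos (M a) with ha | ha
  · have hsource : 0 < vs.count (s a) := List.count_pos_iff.mpr (hpred _ ⟨a, rfl, rfl, ha⟩)
    omega
  · omega

theorem ValidSeq.exists_enabled_execute (h : ValidSeq s t M vs)
    (hwf : WellFounded (TokenFreeAdj s t M)) (hv : v ∉ vs) :
    ∃ w ∉ vs, Enabled s t (execute s t M vs) w := by
  obtain ⟨w, hw, hmin⟩ := hwf.has_min {u | u ∉ vs} ⟨v, hv⟩
  exact ⟨w, hw, h.enabled_execute hw fun u huw => by_contra fun hu => hmin u hu huw⟩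

theorem exists_validSeq_nodup_forall_mem [Finite V] (hwf : WellFounded (TokenFreeAdj s t M)) :
    ∃ vs : List V, ValidSeq s t M vs ∧ vs.Nodup ∧ ∀ v, v ∈ vs := by
  have := Fintype.ofFinite V
  have hfinite : {vs : List V | vs.Nodup ∧ ValidSeq s t M vs}.Finite :=
    have : Finite {vs : List V | vs.Nodup} := inferInstanceAs (Finite {vs : List V // vs.Nodup})
    (Set.toFinite {vs : List V | vs.Nodup}).subset fun _ h => h.1
  obtain ⟨vs, ⟨hnodup, hvalid⟩, hmax⟩ :=
    hfinite.exists_maximalFor List.length _ ⟨[], List.nodup_nil, trivial⟩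
  refine ⟨vs, hvalid, hnodup, fun v => by_contra fun hv => ?_⟩
  obtain ⟨w, hw, hwe⟩ := hvalid.exists_enabled_execute hwf hv
  have hlonger : (vs ++ [w]).Nodup ∧ ValidSeq s t M (vs ++ [w]) :=
    ⟨List.concat_eq_append ▸ hnodup.concat hw, validSeq_append.mpr ⟨hvalid, hwe, trivial⟩⟩
  have hlength := hmax hlonger (by simp)
  simp at hlength

end

theorem stmt_6_general {V A : Type} [Finite V] (s t : A → V) (M : A → ℕ)
    (h : ∀ v, ∃ M', Reaches s t M M' ∧ Enabled s t M' v) :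
    ∃ vs : List V, ValidSeq s t M vs ∧ execute s t M vs = M ∧ ∀ v : V, vs.count v = 1 := by
  obtain ⟨vs, hvalid, hnodup, hmem⟩ :=
    exists_validSeq_nodup_forall_mem (wellFounded_tokenFreeAdj h)
  have hcount (v : V) : vs.count v = 1 := List.count_eq_one_of_mem hnodup (hmem v)
  exact ⟨vs, hvalid, hvalid.execute_eq_self_iff.mpr fun a => by rw [hcount, hcount], hcount⟩

/-- For every live marking `M` of a directed multigraph (finite
nonempty node set, finite arrow set) there is a firing sequence from `M` back
to `M` in which every node occurs exactly once. -/
theorem stmt_6 {V A : Type} [Fintype V] [Nonempty V] [Fintype A]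
    (s t : A → V)
    (M : A → ℕ) (hlive : Live s t M) :
    ∃ vs : List V, ValidSeq s t M vs ∧ execute s t M vs = M ∧
      ∀ v : V, vs.count v = 1 :=
  stmt_6_general s t M fun v => hlive v M .refl
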